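/- Let n, m, N be positive integers, let M ∈ ℂ^{m×m} be Hermitian positive semidefinite, let R ∈ ℂ^{n×m}, let w_0, …, w_{N−1} > 0, let t'_0, …, t'_{N−1} ∈ [0,1), let B ≥ 0, and let D : ℂ^{n×m} → ℂ^{n×m} satisfy ‖D(H)‖_F ≤ B for all H. Set R_limit = max_{0 ≤ i < N} ‖R (M + w_i^{−1} I)^{−1}‖_F + B, and given H_0 ∈ ℂ^{n×m} define H_{i+1} = t'_i · H_0 + (1 − t'_i) · (R + w_i^{−1} D(H_i)) (M + w_i^{−1} I)^{−1} for i = 0, …, N−1. If ‖H_0‖_F ≤ R_limit, then ‖H_i‖_F ≤ R_limit for every 0 ≤ i ≤ N; in particular the inner-loop map T : H_0 ↦ H_N maps the closed Frobenius-norm ball of radius R_limit into itself. -/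

import Mathlib

open Matrix
open scoped ComplexOrder

/-- The Frobenius norm of a complex matrix. -/
noncomputable def frobNorm {n m : ℕ} (A : Matrix (Fin n) (Fin m) ℂ) : ℝ :=
  Real.sqrt (∑ i, ∑ j, ‖A i j‖ ^ 2)

/-- The inner loop of the RC-Flow algorithm: starting from the anchor `H0`, it iterates
`H_{i+1} = t'_i • H0 + (1 - t'_i) • (R + w_i⁻¹ • D(H_i)) * (M + w_i⁻¹ • 1)⁻¹`. -/
noncomputable def innerIter {n m : ℕ} (M : Matrix (Fin m) (Fin m) ℂ)
    (R : Matrix (Fin n) (Fin m) ℂ) (w t' : ℕ → ℝ)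
    (D : Matrix (Fin n) (Fin m) ℂ → Matrix (Fin n) (Fin m) ℂ)
    (H0 : Matrix (Fin n) (Fin m) ℂ) : ℕ → Matrix (Fin n) (Fin m) ℂ
  | 0 => H0
  | i + 1 => t' i • H0 +
      (1 - t' i) • ((R + (w i)⁻¹ • D (innerIter M R w t' D H0 i)) * (M + (w i)⁻¹ • 1)⁻¹)

/-!
For `c > 0` the cross term in `‖Y * M + c • Y‖² = ‖Y * M‖² + 2 c re tr (Y * M * Yᴴ) + ‖c • Y‖²` is
nonnegative, because `M` has positive semidefinite Hermitian part. Taking `Y = X * (M + c • 1)⁻¹`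
shows that `X ↦ c • X * (M + c • 1)⁻¹` does not increase the Frobenius norm, so the proximal
projection of a denoised matrix lies in the ball of radius `‖R * (M + c • 1)⁻¹‖ + B`. Every iterate
is a convex combination of such a matrix and of the anchor, hence stays in the ball.
-/

section AnchoredRecursion

variable {𝕜 E : Type*} [Ring 𝕜] [PartialOrder 𝕜] [IsOrderedAddMonoid 𝕜] [AddCommMonoid E] [SMul 𝕜 E]

theorem mem_of_anchored_recursion {s : Set E} {x : ℕ → E} (hs : StarConvex 𝕜 (x 0) s)
    (hx₀ : x 0 ∈ s) {N : ℕ} {t : ℕ → 𝕜} (ht : ∀ i < N, t i ∈ Set.Icc 0 1) {F : ℕ → E → E}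
    (hF : ∀ i < N, Set.MapsTo (F i) s s)
    (hx : ∀ i < N, x (i + 1) = t i • x 0 + (1 - t i) • F i (x i)) :
    ∀ i ≤ N, x i ∈ s := by
  intro i hi
  induction i with
  | zero => exact hx₀
  | succ i ih =>
    have hiN : i < N := hi
    rw [hx i hiN]
    exact hs (hF i hiN (ih hiN.le)) (ht i hiN).1 (sub_nonneg.2 (ht i hiN).2)
      (add_sub_cancel _ _)

end AnchoredRecursion

section Frobenius

open scoped Matrix.Norms.Frobenius

variable {𝕜 ι κ : Type*} [RCLike 𝕜] [Fintype ι] [Fintype κ]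

theorem frobNorm_eq_norm {n m : ℕ} (A : Matrix (Fin n) (Fin m) ℂ) : frobNorm A = ‖A‖ := by
  simp [frobNorm, frobenius_norm_def, Real.sqrt_eq_rpow]

theorem frobenius_norm_sq_eq_re_trace (A : Matrix ι κ 𝕜) :
    ‖A‖ ^ 2 = RCLike.re (A * Aᴴ).trace := by
  have hnorm : ‖A‖ ^ 2 = ∑ i, ∑ j, ‖A i j‖ ^ 2 := by
    rw [frobenius_norm_def, ← Real.sqrt_eq_rpow, Real.sq_sqrt (by positivity)]
    simp only [Real.rpow_two]
  rw [hnorm]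
  simp only [trace, diag_apply, mul_apply, conjTranspose_apply, RCLike.star_def, RCLike.mul_conj,
    map_sum, ← RCLike.ofReal_pow, RCLike.ofReal_re]

theorem frobenius_norm_add_sq (A B : Matrix ι κ 𝕜) :
    ‖A + B‖ ^ 2 = ‖A‖ ^ 2 + 2 * RCLike.re (A * Bᴴ).trace + ‖B‖ ^ 2 := by
  have hcross : RCLike.re (B * Aᴴ).trace = RCLike.re (A * Bᴴ).trace := by
    rw [← RCLike.conj_re, ← RCLike.star_def, ← trace_conjTranspose, conjTranspose_mul,
      conjTranspose_conjTranspose]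
  simp only [frobenius_norm_sq_eq_re_trace, conjTranspose_add, Matrix.add_mul, Matrix.mul_add,
    trace_add, map_add, hcross]
  ring

theorem frobenius_norm_le_norm_add_of_re_trace_nonneg {A B : Matrix ι κ 𝕜}
    (h : 0 ≤ RCLike.re (A * Bᴴ).trace) : ‖B‖ ≤ ‖A + B‖ := by
  refine (sq_le_sq₀ (norm_nonneg _) (norm_nonneg _)).1 ?_
  rw [frobenius_norm_add_sq]
  linarith [sq_nonneg ‖A‖]

variable {M : Matrix κ κ 𝕜}

theorem re_trace_mul_mul_conjTranspose_nonneg (hM : (M + Mᴴ).PosSemidef) (Y : Matrix ι κ 𝕜) :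
    0 ≤ RCLike.re (Y * M * Yᴴ).trace := by
  have hadj : RCLike.re (Y * Mᴴ * Yᴴ).trace = RCLike.re (Y * M * Yᴴ).trace := by
    rw [← RCLike.conj_re, ← RCLike.star_def, ← trace_conjTranspose]
    simp only [conjTranspose_mul, conjTranspose_conjTranspose, Matrix.mul_assoc]
  have hsum : 0 ≤ RCLike.re (Y * (M + Mᴴ) * Yᴴ).trace :=
    (RCLike.nonneg_iff.1 (hM.mul_mul_conjTranspose_same Y).trace_nonneg).1
  rw [Matrix.mul_add, Matrix.add_mul, trace_add, map_add, hadj] at hsum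
  linarith

variable [DecidableEq κ] {c : ℝ}

theorem frobenius_norm_smul_le_norm_mul_add_smul_one (hM : (M + Mᴴ).PosSemidef) (hc : 0 ≤ c)
    (Y : Matrix ι κ 𝕜) : ‖c • Y‖ ≤ ‖Y * (M + c • 1)‖ := by
  rw [Matrix.mul_add, Matrix.mul_smul, Matrix.mul_one]
  apply frobenius_norm_le_norm_add_of_re_trace_nonneg
  rw [conjTranspose_smul, star_trivial, Matrix.mul_smul, trace_smul, RCLike.smul_re]
  exact mul_nonneg hc (re_trace_mul_mul_conjTranspose_nonneg hM Y)

theorem isUnit_add_smul_one_of_posSemidef_add_conjTranspose (hM : (M + Mᴴ).PosSemidef)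
    (hc : 0 < c) : IsUnit (M + c • (1 : Matrix κ κ 𝕜)) := by
  rw [IsArtinianRing.isUnit_iff_isRightRegular, isRightRegular_iff_left_eq_zero_of_mul]
  intro Y hY
  have hbound := frobenius_norm_smul_le_norm_mul_add_smul_one hM hc.le Y
  rw [hY, norm_zero, norm_le_zero_iff] at hbound
  exact (smul_eq_zero.1 hbound).resolve_left hc.ne'

theorem frobenius_norm_smul_mul_inv_le (hM : (M + Mᴴ).PosSemidef) (hc : 0 < c)
    (X : Matrix ι κ 𝕜) : ‖(c • X) * (M + c • 1)⁻¹‖ ≤ ‖X‖ := by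
  have hdet : IsUnit (M + c • (1 : Matrix κ κ 𝕜)).det :=
    (isUnit_iff_isUnit_det _).1 (isUnit_add_smul_one_of_posSemidef_add_conjTranspose hM hc)
  calc ‖(c • X) * (M + c • 1)⁻¹‖ = ‖c • (X * (M + c • 1)⁻¹)‖ := by rw [Matrix.smul_mul]
    _ ≤ ‖X * (M + c • 1)⁻¹ * (M + c • 1)‖ :=
      frobenius_norm_smul_le_norm_mul_add_smul_one hM hc.le _
    _ = ‖X‖ := by rw [nonsing_inv_mul_cancel_right _ _ hdet]

/-- The physics-aware proximal projection with data matrix `R` and weight `w`, the step of the inner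
loop that is applied to a denoised matrix `X`. It is meaningful when `M + w⁻¹ • 1` is invertible;
otherwise the matrix inverse takes its default value `0`. -/
noncomputable def proximalProjection (M : Matrix κ κ 𝕜) (R : Matrix ι κ 𝕜) (w : ℝ)
    (X : Matrix ι κ 𝕜) : Matrix ι κ 𝕜 :=
  (R + w⁻¹ • X) * (M + w⁻¹ • 1)⁻¹

theorem norm_proximalProjection_le (hM : (M + Mᴴ).PosSemidef) {w : ℝ} (hw : 0 < w)
    (R X : Matrix ι κ 𝕜) :
    ‖proximalProjection M R w X‖ ≤ ‖R * (M + w⁻¹ • 1)⁻¹‖ + ‖X‖ := by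
  rw [proximalProjection, Matrix.add_mul]
  exact (norm_add_le _ _).trans
    (add_le_add le_rfl (frobenius_norm_smul_mul_inv_le hM (inv_pos.2 hw) X))

theorem rcflow_inner_loop_self_map_general (hM : (M + Mᴴ).PosSemidef) {N : ℕ} {w t : ℕ → ℝ}
    (hw : ∀ i < N, 0 < w i) (ht : ∀ i < N, t i ∈ Set.Icc 0 1) {R : Matrix ι κ 𝕜} {B r : ℝ}
    (hr : ∀ i < N, ‖R * (M + (w i)⁻¹ • 1)⁻¹‖ + B ≤ r)
    {D : Matrix ι κ 𝕜 → Matrix ι κ 𝕜} (hD : ∀ X, ‖X‖ ≤ r → ‖D X‖ ≤ B)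
    {H : ℕ → Matrix ι κ 𝕜} (hH₀ : ‖H 0‖ ≤ r)
    (hH : ∀ i < N, H (i + 1) = t i • H 0 + (1 - t i) • proximalProjection M R (w i) (D (H i))) :
    ∀ i ≤ N, ‖H i‖ ≤ r := by
  have hstep : ∀ i < N, Set.MapsTo (fun X => proximalProjection M R (w i) (D X))
      (Metric.closedBall 0 r) (Metric.closedBall 0 r) := by
    intro i hi X hX
    rw [mem_closedBall_zero_iff] at hX ⊢
    calc ‖proximalProjection M R (w i) (D X)‖
        ≤ ‖R * (M + (w i)⁻¹ • 1)⁻¹‖ + ‖D X‖ := norm_proximalProjection_le hM (hw i hi) R (D X)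
      _ ≤ ‖R * (M + (w i)⁻¹ • 1)⁻¹‖ + B := by gcongr; exact hD X hX
      _ ≤ r := hr i hi
  have hball : H 0 ∈ Metric.closedBall 0 r := mem_closedBall_zero_iff.2 hH₀
  intro i hi
  exact mem_closedBall_zero_iff.1 <|
    mem_of_anchored_recursion ((convex_closedBall 0 r).starConvex hball) hball ht hstep hH i hi

end Frobenius

/-- **Self-mapping on a compact ball.**  If `‖H0‖_F ≤ R_limit`, then every iterate of the
inner loop stays in the closed Frobenius ball of radius
`R_limit = max_i ‖R (M + w_i⁻¹ I)⁻¹‖_F + B`; in particular the inner-loop map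
`T : H0 ↦ H_N` maps this ball into itself. -/
theorem rcflow_inner_loop_self_map {n m N : ℕ} (hn : 0 < n) (hm : 0 < m) (hN : 0 < N)
    (M : Matrix (Fin m) (Fin m) ℂ) (hM : M.PosSemidef)
    (R : Matrix (Fin n) (Fin m) ℂ)
    (w t' : ℕ → ℝ) (hw : ∀ i < N, 0 < w i) (ht' : ∀ i < N, t' i ∈ Set.Ico (0 : ℝ) 1)
    (B : ℝ) (hB : 0 ≤ B)
    (D : Matrix (Fin n) (Fin m) ℂ → Matrix (Fin n) (Fin m) ℂ)
    (hDbdd : ∀ H, frobNorm (D H) ≤ B)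
    (Rlimit : ℝ)
    (hRlimit : Rlimit =
      ((Finset.range N).sup' (Finset.nonempty_range_iff.mpr hN.ne')
        fun i => frobNorm (R * (M + (w i)⁻¹ • 1)⁻¹)) + B)
    (H0 : Matrix (Fin n) (Fin m) ℂ) (hH0 : frobNorm H0 ≤ Rlimit) :
    (∀ i ≤ N, frobNorm (innerIter M R w t' D H0 i) ≤ Rlimit) ∧
      frobNorm (innerIter M R w t' D H0 N) ≤ Rlimit := by
  have hradius : ∀ i < N, frobNorm (R * (M + (w i)⁻¹ • 1)⁻¹) + B ≤ Rlimit := fun i hi => by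
    rw [hRlimit]
    gcongr
    exact Finset.le_sup' (fun i => frobNorm (R * (M + (w i)⁻¹ • 1)⁻¹)) (Finset.mem_range.2 hi)
  simp only [frobNorm_eq_norm] at hradius hDbdd hH0 ⊢
  have hbound := rcflow_inner_loop_self_map_general (hM.add hM.conjTranspose) hw
    (fun i hi => Set.Ico_subset_Icc_self (ht' i hi)) hradius (fun X _ => hDbdd X)
    (H := innerIter M R w t' D H0) hH0 (fun _ _ => rfl)
  exact ⟨hbound, hbound N le_rfl⟩
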